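/- arXiv:1902.07937 — 5 statements merged into one kernel-verified Lean document; each statement's English description precedes it below -/
import Mathlib

section
/- In a social Schelling game whose topology G = (V,E) has maximum degree 2, define for each assignment v and each edge e = {a,b} ∈ E the quantity φ(v,e) equal to 1 if a and b are occupied by two agents who are friends, equal to 0 if a and b are occupied by two agents who are enemies, and equal to 1/3 if at least one of a, b is unoccupied; let Φ(v) = Σ_{e∈E} φ(v,e). Then Φ is an ordinal potential function: whenever a strategic agent strictly increases her utility by relocating from her node to an unoccupied node, producing assignment v' from assignment v, it holds that Φ(v') > Φ(v). -/
/-- A (social) Schelling game: agents `A`, of which `strategic` are the strategic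
ones (the rest being stubborn), a social network `net` on the agents (the friends
of an agent are her neighbors in `net`, all other agents are her enemies), a
topology `top` on the set of locations `V`, and the preferred locations `loc`
of the (stubborn) agents. -/
structure SchellingGame (A V : Type) where
  strategic : Finset A
  net : SimpleGraph A
  top : SimpleGraph V
  loc : A → V

namespace SchellingGame

variable {A V : Type} [Fintype A] [DecidableEq A] [Fintype V] [DecidableEq V]

/-- There are `n ≥ 2` agents, strictly more locations than agents, and the
stubborn agents have pairwise distinct preferred locations. -/
def WellFormed (g : SchellingGame A V) : Prop :=
  2 ≤ Fintype.card A ∧ Fintype.card A < Fintype.card V ∧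
    Set.InjOn g.loc ↑(g.strategicᶜ)

/-- An assignment is an injective placement of the agents on the nodes of the
topology which places every stubborn agent at her preferred location. -/
def IsAssignment (g : SchellingGame A V) (v : A → V) : Prop :=
  Function.Injective v ∧ ∀ i ∉ g.strategic, v i = g.loc i

/-- The number of friends of `i` occupying nodes adjacent to `v i`. -/
noncomputable def fcount (g : SchellingGame A V) (v : A → V) (i : A) : ℕ :=
  Nat.card {j : A // g.net.Adj i j ∧ g.top.Adj (v i) (v j)}

/-- The number of enemies of `i` occupying nodes adjacent to `v i`. -/
noncomputable def ecount (g : SchellingGame A V) (v : A → V) (i : A) : ℕ :=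
  Nat.card {j : A // j ≠ i ∧ ¬ g.net.Adj i j ∧ g.top.Adj (v i) (v j)}

/-- The utility of agent `i` under assignment `v`: `0` if `i` has no adjacent
friends, and otherwise the fraction of friends among her occupied neighbors. -/
noncomputable def util (g : SchellingGame A V) (v : A → V) (i : A) : ℚ :=
  if g.fcount v i = 0 then 0
  else (g.fcount v i : ℚ) / ((g.fcount v i : ℚ) + (g.ecount v i : ℚ))

/-- An assignment is an equilibrium if no strategic agent can strictly increase
her utility by relocating to an unoccupied node. -/
def IsEquilibrium (g : SchellingGame A V) (v : A → V) : Prop :=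
  g.IsAssignment v ∧ ∀ i ∈ g.strategic, ∀ z : V, (∀ j : A, v j ≠ z) →
    g.util (Function.update v i z) i ≤ g.util v i

/-- The social welfare: the total utility of the strategic agents. -/
noncomputable def SW (g : SchellingGame A V) (v : A → V) : ℚ :=
  ∑ i ∈ g.strategic, g.util v i

/-- `g` is a `k`-typed Schelling game with type map `typ`: two distinct agents are
friends iff they have the same type, and every type is nonempty. -/
def IsTypedGame (g : SchellingGame A V) (k : ℕ) (typ : A → Fin k) : Prop :=
  (∀ i j : A, g.net.Adj i j ↔ (i ≠ j ∧ typ i = typ j)) ∧ ∀ c : Fin k, ∃ i : A, typ i = c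

end SchellingGame

/-- A star graph: one center node adjacent to all other nodes, and no other edges. -/
def IsStar {V : Type} (G : SimpleGraph V) : Prop :=
  ∃ c : V, ∀ a b : V, G.Adj a b ↔ (a ≠ b ∧ (a = c ∨ b = c))

namespace SchellingGame

variable {A V : Type} [Fintype A] [DecidableEq A] [Fintype V] [DecidableEq V]

open Classical in
/-- The potential of a pair of nodes `a, b` (intended for edges `{a,b}` of the
topology): `1` if `a` and `b` are occupied by two agents who are friends, `0` if
they are occupied by two agents who are enemies, and `1/3` if at least one of
`a`, `b` is unoccupied. -/
noncomputable def phiPair (g : SchellingGame A V) (v : A → V) (a b : V) : ℚ :=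
  if (¬ (∃ i : A, v i = a)) ∨ (¬ (∃ j : A, v j = b)) then 1/3
  else if ∃ i j : A, v i = a ∧ v j = b ∧ g.net.Adj i j then 1
  else 0

theorem phiPair_symm (g : SchellingGame A V) (v : A → V) (a b : V) :
    g.phiPair v a b = g.phiPair v b a := by
  classical
  unfold phiPair
  have h1 : ((¬ (∃ i : A, v i = a)) ∨ (¬ (∃ j : A, v j = b))) ↔
      ((¬ (∃ i : A, v i = b)) ∨ (¬ (∃ j : A, v j = a))) := or_comm
  have h2 : (∃ i j : A, v i = a ∧ v j = b ∧ g.net.Adj i j) ↔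
      (∃ i j : A, v i = b ∧ v j = a ∧ g.net.Adj i j) := by
    constructor <;> rintro ⟨i, j, hi, hj, hf⟩ <;> exact ⟨j, i, hj, hi, hf.symm⟩
  simp only [h1, h2]

/-- The potential `Φ(v) = Σ_{e ∈ E} φ(v, e)` of an assignment `v`. -/
noncomputable def Phi (g : SchellingGame A V) [DecidableRel g.top.Adj] (v : A → V) : ℚ :=
  ∑ e ∈ g.top.edgeFinset, Sym2.lift ⟨g.phiPair v, g.phiPair_symm v⟩ e

end SchellingGame

namespace SchellingGame

theorem two_mul_Phi {A V : Type} [Fintype A] [DecidableEq A] [Fintype V] [DecidableEq V]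
    (g : SchellingGame A V) [DecidableRel g.top.Adj] (v : A → V) :
    2 * g.Phi v = ∑ a, ∑ b, if g.top.Adj a b then g.phiPair v a b else 0 := by
  have h1 : ∑ d : g.top.Dart, g.phiPair v d.fst d.snd = 2 * g.Phi v := by
    rw [← Finset.sum_fiberwise_of_maps_to (s := Finset.univ) (t := g.top.edgeFinset)
      (g := fun d : g.top.Dart => d.edge)
      (fun d _ => by rw [SimpleGraph.mem_edgeFinset]; exact d.edge_mem)]
    unfold Phi
    rw [Finset.mul_sum]
    refine Finset.sum_congr rfl fun e he => ?_
    have hc := g.top.dart_edge_fiber_card e (by simpa using he)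
    rw [Finset.sum_congr rfl (g := fun _ => Sym2.lift ⟨g.phiPair v, g.phiPair_symm v⟩ e)]
    · rw [Finset.sum_const, hc]; simp
    · intro d hd
      have hd' : d.edge = e := by simpa using hd
      rw [← hd']
      rfl
  rw [← h1, ← Finset.sum_product', ← Finset.sum_filter]
  refine Finset.sum_bij' (fun d _ => (d.fst, d.snd)) (fun p hp => ⟨p, (Finset.mem_filter.1 hp).2⟩)
    ?_ ?_ ?_ ?_ ?_ <;> simp

open Classical in
noncomputable def wt {A V : Type} (g : SchellingGame A V) (j k : A) : ℚ :=
  if g.net.Adj j k then 2/3 else -1/3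

open Classical in
noncomputable def hh {A V : Type} (g : SchellingGame A V) (v : A → V) (j k : A) : ℚ :=
  if g.top.Adj (v j) (v k) then g.wt j k else 0

open Classical in
theorem phiPair_expand {A V : Type} [Fintype A] [DecidableEq A] [Fintype V] [DecidableEq V]
    (g : SchellingGame A V) (v : A → V) (hv : Function.Injective v) (a b : V) :
    g.phiPair v a b = 1/3 + ∑ j, ∑ k, if v j = a ∧ v k = b then g.wt j k else 0 := by
  by_cases h : (¬ (∃ i : A, v i = a)) ∨ (¬ (∃ j : A, v j = b))
  · have : ∑ j, ∑ k, (if v j = a ∧ v k = b then g.wt j k else 0) = 0 := by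
      refine Finset.sum_eq_zero fun j _ => Finset.sum_eq_zero fun k _ => if_neg ?_
      rintro ⟨h1, h2⟩
      rcases h with h | h
      · exact h ⟨j, h1⟩
      · exact h ⟨k, h2⟩
    rw [this, phiPair, if_pos h]; simp
  · have h0 := h
    push Not at h
    obtain ⟨⟨j, rfl⟩, ⟨k, rfl⟩⟩ := h
    have : ∑ j', ∑ k', (if v j' = v j ∧ v k' = v k then g.wt j' k' else 0) = g.wt j k := by
      simp only [hv.eq_iff, ite_and]
      simp
    rw [this, phiPair, if_neg h0, wt]
    have : (∃ i' j', v i' = v j ∧ v j' = v k ∧ g.net.Adj i' j') ↔ g.net.Adj j k := by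
      simp [hv.eq_iff]
    simp only [this]
    split_ifs <;> norm_num

theorem two_mul_Phi' {A V : Type} [Fintype A] [DecidableEq A] [Fintype V] [DecidableEq V]
    (g : SchellingGame A V) [DecidableRel g.top.Adj] (v : A → V) (hv : Function.Injective v) :
    2 * g.Phi v = (∑ a, ∑ b, if g.top.Adj a b then (1/3 : ℚ) else 0) +
      ∑ j, ∑ k, g.hh v j k := by
  classical
  have key : ∑ j, ∑ k, g.hh v j k = ∑ a, ∑ b, ∑ j, ∑ k,
      if g.top.Adj a b then (if v j = a ∧ v k = b then g.wt j k else 0) else 0 := by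
    have e1 : ∀ j k, g.hh v j k = ∑ a, ∑ b,
        if g.top.Adj a b then (if v j = a ∧ v k = b then g.wt j k else 0) else 0 := by
      intro j k
      rw [Finset.sum_eq_single (v j), Finset.sum_eq_single (v k)]
      · simp [hh]
      · intro b _ hb; simp [hb.symm]
      · simp
      · intro b _ hb; simp [hb.symm]
      · simp
    simp only [e1]
    rw [Finset.sum_congr rfl fun j _ => Finset.sum_comm, Finset.sum_comm]
    refine Finset.sum_congr rfl fun a _ => ?_
    rw [Finset.sum_congr rfl fun j _ => Finset.sum_comm, Finset.sum_comm]
  rw [two_mul_Phi, key, ← Finset.sum_add_distrib]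
  refine Finset.sum_congr rfl fun a _ => ?_
  rw [← Finset.sum_add_distrib]
  refine Finset.sum_congr rfl fun b _ => ?_
  rw [phiPair_expand g v hv]
  split_ifs <;> simp

theorem wt_symm {A V : Type} (g : SchellingGame A V) (j k : A) : g.wt j k = g.wt k j := by
  have h := g.net.adj_comm j k
  by_cases h1 : g.net.Adj k j <;> simp [wt, h, h1]

theorem hh_symm {A V : Type} (g : SchellingGame A V) (v : A → V) (j k : A) :
    g.hh v j k = g.hh v k j := by
  have h := g.top.adj_comm (v j) (v k)
  by_cases h1 : g.top.Adj (v k) (v j) <;> simp [hh, h, h1, g.wt_symm j k]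

theorem hh_self {A V : Type} (g : SchellingGame A V) (v : A → V) (j : A) :
    g.hh v j j = 0 := by
  simp [hh]

theorem sum_hh_split {A V : Type} [Fintype A] [DecidableEq A]
    (g : SchellingGame A V) (v : A → V) (i : A) :
    ∑ j, ∑ k, g.hh v j k =
      (∑ j ∈ Finset.univ.erase i, ∑ k ∈ Finset.univ.erase i, g.hh v j k)
        + 2 * ∑ k, g.hh v i k := by
  rw [← Finset.sum_erase_add _ _ (Finset.mem_univ i)]
  have : ∀ j, ∑ k, g.hh v j k = ∑ k ∈ Finset.univ.erase i, g.hh v j k + g.hh v i j := by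
    intro j
    rw [← Finset.sum_erase_add _ _ (Finset.mem_univ i), g.hh_symm v j i]
  rw [Finset.sum_congr rfl fun j _ => this j, Finset.sum_add_distrib]
  have h2 : ∑ k, g.hh v i k = ∑ k ∈ Finset.univ.erase i, g.hh v i k := by
    rw [← Finset.sum_erase_add _ _ (Finset.mem_univ i), g.hh_self]; simp
  rw [h2]; ring

theorem sum_hh_row {A V : Type} [Fintype A] [DecidableEq A]
    (g : SchellingGame A V) (v : A → V) (i : A) :
    3 * ∑ k, g.hh v i k = 2 * (g.fcount v i : ℚ) - g.ecount v i := by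
  classical
  rw [fcount, ecount, Nat.card_eq_fintype_card, Nat.card_eq_fintype_card,
    Fintype.card_subtype, Fintype.card_subtype, Finset.card_filter, Finset.card_filter]
  push_cast
  rw [Finset.mul_sum, Finset.mul_sum, ← Finset.sum_sub_distrib]
  refine Finset.sum_congr rfl fun k _ => ?_
  by_cases hk : k = i
  · subst hk; simp [hh]
  · by_cases h1 : g.net.Adj i k <;> by_cases h2 : g.top.Adj (v i) (v k) <;>
      simp [hh, wt, h1, h2, hk] <;> norm_num

theorem count_le {A V : Type} [Fintype A] [DecidableEq A] [Fintype V]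
    (g : SchellingGame A V) (v : A → V) (hv : Function.Injective v) (i : A)
    (hdeg : ∀ a : V, Nat.card {b : V // g.top.Adj a b} ≤ 2) :
    g.fcount v i + g.ecount v i ≤ 2 := by
  classical
  refine le_trans ?_ (hdeg (v i))
  rw [fcount, ecount, Nat.card_eq_fintype_card, Nat.card_eq_fintype_card,
    Nat.card_eq_fintype_card,
    Fintype.card_subtype, Fintype.card_subtype, Fintype.card_subtype,
    ← Finset.card_union_of_disjoint]
  · refine Finset.card_le_card_of_injOn v ?_ hv.injOn
    intro j hj
    simp at hj ⊢
    tauto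
  · rw [Finset.disjoint_left]
    intro j h1 h2
    simp at h1 h2
    tauto

end SchellingGame

/-- in a social Schelling game whose topology has maximum degree 2, the
function `Φ` is an ordinal potential: any strictly profitable deviation of a strategic
agent to an unoccupied node strictly increases `Φ`. -/
theorem stmt2 (A V : Type) [Fintype A] [DecidableEq A] [Fintype V] [DecidableEq V]
    (g : SchellingGame A V) [DecidableRel g.top.Adj] (hwf : g.WellFormed)
    (hdeg : ∀ a : V, Nat.card {b : V // g.top.Adj a b} ≤ 2)
    (v : A → V) (hv : g.IsAssignment v) (i : A) (hi : i ∈ g.strategic)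
    (z : V) (hz : ∀ j : A, v j ≠ z)
    (hprofit : g.util v i < g.util (Function.update v i z) i) :
    g.Phi v < g.Phi (Function.update v i z) := by
  classical
  have hinj' : Function.Injective (Function.update v i z) := by
    intro a b hab
    by_cases ha : a = i <;> by_cases hb : b = i
    · rw [ha, hb]
    · subst ha; simp [hb] at hab; exact absurd hab.symm (hz b)
    · subst hb; simp [ha] at hab; exact absurd hab (hz a)
    · simp [ha, hb] at hab; exact hv.1 hab
  have p1 := g.two_mul_Phi' v hv.1
  have p2 := g.two_mul_Phi' _ hinj'
  rw [g.sum_hh_split _ i] at p1 p2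
  have hC : (∑ j ∈ Finset.univ.erase i, ∑ k ∈ Finset.univ.erase i,
        g.hh (Function.update v i z) j k) =
      ∑ j ∈ Finset.univ.erase i, ∑ k ∈ Finset.univ.erase i, g.hh v j k := by
    refine Finset.sum_congr rfl fun j hj => Finset.sum_congr rfl fun k hk => ?_
    have hj' : j ≠ i := Finset.ne_of_mem_erase hj
    have hk' : k ≠ i := Finset.ne_of_mem_erase hk
    simp [SchellingGame.hh, hj', hk']
  rw [hC] at p2
  have r1 := g.sum_hh_row v i
  have r2 := g.sum_hh_row (Function.update v i z) i
  have c1 := g.count_le v hv.1 i hdeg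
  have c2 := g.count_le _ hinj' i hdeg
  have key : 2 * (g.fcount v i : ℚ) - g.ecount v i <
      2 * (g.fcount (Function.update v i z) i : ℚ) - g.ecount (Function.update v i z) i := by
    unfold SchellingGame.util at hprofit
    generalize g.fcount v i = f at *
    generalize g.ecount v i = e at *
    generalize g.fcount (Function.update v i z) i = f' at *
    generalize g.ecount (Function.update v i z) i = e' at *
    clear p1 p2 r1 r2 hC
    have : f ≤ 2 := by omega
    have : e ≤ 2 := by omega
    have : f' ≤ 2 := by omega
    have : e' ≤ 2 := by omega
    interval_cases f <;> interval_cases e <;> first | omega | skip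
    all_goals interval_cases f' <;> interval_cases e' <;> first | omega | skip
    all_goals first | (exfalso; norm_num at hprofit; done) | (norm_num; done)
  linarith
end

section
/- Every k-typed Schelling game whose topology is a star graph or a graph of maximum degree 2 admits at least one equilibrium assignment. -/
open Classical in
theorem exists_assign {A V : Type} [Fintype A] [DecidableEq A] [Fintype V] [DecidableEq V]
    (g : SchellingGame A V) (hwf : g.WellFormed) : ∃ v : A → V, g.IsAssignment v := by
  obtain ⟨-, hc, hinj⟩ := hwf
  have hcard : (g.strategicᶜ.image g.loc).card ≤ Fintype.card A :=
    Finset.card_image_le.trans (Finset.card_le_univ _)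
  obtain ⟨t, ht1, -, ht2⟩ := Finset.exists_subsuperset_card_eq
    (Finset.subset_univ (g.strategicᶜ.image g.loc)) hcard (by rw [Finset.card_univ]; exact hc.le)
  obtain ⟨e, he⟩ := Finset.exists_equiv_extend_of_card_eq ht2.symm ht1 hinj
  refine ⟨fun a => (e a : V), Subtype.val_injective.comp e.injective, ?_⟩
  intro i hi
  exact he i (by simpa using hi)

theorem update_assign {A V : Type} [Fintype A] [DecidableEq A] [Fintype V] [DecidableEq V]
    (g : SchellingGame A V) (v : A → V) (hv : g.IsAssignment v) (i : A) (hi : i ∈ g.strategic)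
    (z : V) (hz : ∀ j, v j ≠ z) : g.IsAssignment (Function.update v i z) := by
  refine ⟨?_, ?_⟩
  · intro a b hab
    by_cases ha : a = i <;> by_cases hb : b = i
    · rw [ha, hb]
    · subst ha
      simp [Function.update_of_ne hb] at hab
      exact absurd hab.symm (hz b)
    · subst hb
      simp [Function.update_of_ne ha] at hab
      exact absurd hab (hz a)
    · rw [Function.update_of_ne ha, Function.update_of_ne hb] at hab
      exact hv.1 hab
  · intro j hj
    have : j ≠ i := fun h => hj (h ▸ hi)
    rw [Function.update_of_ne this]
    exact hv.2 j hj

theorem util_nonneg' {A V : Type} [Fintype A] [DecidableEq A] [Fintype V] [DecidableEq V]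
    (g : SchellingGame A V) (v : A → V) (i : A) : 0 ≤ g.util v i := by
  unfold SchellingGame.util
  split_ifs
  · exact le_rfl
  · positivity

theorem util_zero' {A V : Type} [Fintype A] [DecidableEq A] [Fintype V] [DecidableEq V]
    (g : SchellingGame A V) (v : A → V) (i : A) (h : ∀ j, j ≠ i → ¬ g.top.Adj (v i) (v j)) :
    g.util v i = 0 := by
  unfold SchellingGame.util
  rw [if_pos]
  unfold SchellingGame.fcount
  rw [Nat.card_eq_zero]
  left
  exact ⟨fun ⟨j, hj, hj'⟩ => h j hj.ne' hj'⟩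

theorem util_congr' {A V : Type} [Fintype A] [DecidableEq A] [Fintype V] [DecidableEq V]
    (g : SchellingGame A V) (v w : A → V) (i : A)
    (h : ∀ j, j ≠ i → (g.top.Adj (v i) (v j) ↔ g.top.Adj (w i) (w j))) :
    g.util v i = g.util w i := by
  have h1 : g.fcount v i = g.fcount w i := by
    unfold SchellingGame.fcount
    refine Nat.card_congr (Equiv.subtypeEquivRight fun j => ?_)
    exact and_congr_right fun hj => h j hj.ne'
  have h2 : g.ecount v i = g.ecount w i := by
    unfold SchellingGame.ecount
    refine Nat.card_congr (Equiv.subtypeEquivRight fun j => ?_)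
    exact and_congr_right fun hj => and_congr_right fun _ => h j hj
  unfold SchellingGame.util
  rw [h1, h2]

theorem star_occ {A V : Type} [Fintype A] [DecidableEq A] [Fintype V] [DecidableEq V]
    (g : SchellingGame A V) (c : V) (hc : ∀ a b : V, g.top.Adj a b ↔ (a ≠ b ∧ (a = c ∨ b = c)))
    (v : A → V) (hv : g.IsAssignment v) (o : A) (ho : v o = c) : g.IsEquilibrium v := by
  refine ⟨hv, fun i _ z hz => ?_⟩
  have hzc : z ≠ c := fun h => hz o (ho.trans h.symm)
  by_cases hio : i = o
  · subst hio
    rw [util_zero' g (Function.update v i z) i]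
    · exact util_nonneg' _ _ _
    · intro j hj
      rw [hc, Function.update_self, Function.update_of_ne hj]
      rintro ⟨-, h | h⟩
      · exact hzc h
      · exact hj (hv.1 (h.trans ho.symm))
  · apply le_of_eq
    apply util_congr'
    intro j hj
    rw [hc, hc, Function.update_self, Function.update_of_ne hj]
    have hic : v i ≠ c := fun h => hio (hv.1 (h.trans ho.symm))
    have h1 : v i ≠ v j := fun h => hj (hv.1 h.symm)
    have h2 : z ≠ v j := fun h => hz j h.symm
    tauto

open Classical in
noncomputable def pairF {A V : Type} (g : SchellingGame A V) (v : A → V) (i j : A) : ℤ :=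
  if g.top.Adj (v i) (v j) then (if g.net.Adj i j then 2 else -1) else 0

theorem pairF_symm {A V : Type} (g : SchellingGame A V) (v : A → V) (i j : A) :
    pairF g v i j = pairF g v j i := by
  unfold pairF
  rw [g.top.adj_comm (v i) (v j), g.net.adj_comm i j]

theorem pairF_self {A V : Type} (g : SchellingGame A V) (v : A → V) (i : A) :
    pairF g v i i = 0 := by
  simp [pairF]

noncomputable def pot {A V : Type} [Fintype A] (g : SchellingGame A V) (v : A → V) : ℤ :=
  ∑ i, ∑ j, pairF g v i j

theorem pot_split {A V : Type} [Fintype A] [DecidableEq A]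
    (g : SchellingGame A V) (v : A → V) (i : A) :
    pot g v = 2 * (∑ j, pairF g v i j) +
      ∑ a ∈ Finset.univ.erase i, ∑ b ∈ Finset.univ.erase i, pairF g v a b := by
  unfold pot
  rw [← Finset.add_sum_erase _ _ (Finset.mem_univ i)]
  have : ∀ a, ∑ j, pairF g v a j = pairF g v i a + ∑ b ∈ Finset.univ.erase i, pairF g v a b := by
    intro a
    rw [← Finset.add_sum_erase _ _ (Finset.mem_univ i), pairF_symm g v a i]
  have h2 : ∑ a ∈ Finset.univ.erase i, ∑ j, pairF g v a j =
      ∑ a ∈ Finset.univ.erase i, pairF g v i a +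
      ∑ a ∈ Finset.univ.erase i, ∑ b ∈ Finset.univ.erase i, pairF g v a b := by
    rw [← Finset.sum_add_distrib]
    exact Finset.sum_congr rfl fun a _ => this a
  have h3 := this i
  rw [pairF_self] at h3
  rw [h2]
  linarith

theorem sum_pairF {A V : Type} [Fintype A] [DecidableEq A] [Fintype V] [DecidableEq V]
    (g : SchellingGame A V) (v : A → V) (i : A) :
    ∑ j, pairF g v i j = 2 * (g.fcount v i : ℤ) - g.ecount v i := by
  classical
  unfold SchellingGame.fcount SchellingGame.ecount
  rw [Nat.card_eq_fintype_card, Nat.card_eq_fintype_card, Fintype.card_subtype,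
    Fintype.card_subtype, Finset.card_filter, Finset.card_filter]
  push_cast
  rw [Finset.mul_sum, ← Finset.sum_sub_distrib]
  refine Finset.sum_congr rfl fun j _ => ?_
  unfold pairF
  by_cases h : j = i
  · subst h; simp
  · by_cases h1 : g.top.Adj (v i) (v j) <;> by_cases h2 : g.net.Adj i j <;> simp [h, h1, h2]

theorem fe_le {A V : Type} [Fintype A] [DecidableEq A] [Fintype V] [DecidableEq V]
    (g : SchellingGame A V) (hd : ∀ a : V, Nat.card {b : V // g.top.Adj a b} ≤ 2)
    (v : A → V) (hv : Function.Injective v) (i : A) :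
    g.fcount v i + g.ecount v i ≤ 2 := by
  refine le_trans ?_ (hd (v i))
  unfold SchellingGame.fcount SchellingGame.ecount
  rw [← Nat.card_sum]
  refine Nat.card_le_card_of_injective
    (Sum.elim (fun j => ⟨v j.1, j.2.2⟩) (fun j => ⟨v j.1, j.2.2.2⟩)) ?_
  rintro (⟨a, ha⟩ | ⟨a, ha⟩) (⟨b, hb⟩ | ⟨b, hb⟩) hab <;>
    simp only [Sum.elim_inl, Sum.elim_inr, Subtype.mk.injEq] at hab <;>
    have := hv hab <;> subst this
  · rfl
  · exact absurd ha.1 hb.2.1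
  · exact absurd hb.1 ha.2.1
  · rfl

theorem pot_lt {A V : Type} [Fintype A] [DecidableEq A] [Fintype V] [DecidableEq V]
    (g : SchellingGame A V) (hd : ∀ a : V, Nat.card {b : V // g.top.Adj a b} ≤ 2)
    (v : A → V) (hv : Function.Injective v) (i : A) (z : V)
    (hv' : Function.Injective (Function.update v i z))
    (hlt : g.util v i < g.util (Function.update v i z) i) :
    pot g v < pot g (Function.update v i z) := by
  rw [pot_split g v i, pot_split g (Function.update v i z) i, sum_pairF, sum_pairF]
  have hr : ∑ a ∈ Finset.univ.erase i, ∑ b ∈ Finset.univ.erase i, pairF g (Function.update v i z) a b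
      = ∑ a ∈ Finset.univ.erase i, ∑ b ∈ Finset.univ.erase i, pairF g v a b := by
    refine Finset.sum_congr rfl fun a ha => Finset.sum_congr rfl fun b hb => ?_
    unfold pairF
    rw [Function.update_of_ne (Finset.ne_of_mem_erase ha),
      Function.update_of_ne (Finset.ne_of_mem_erase hb)]
  rw [hr]
  have h1 := fe_le g hd v hv i
  have h2 := fe_le g hd _ hv' i
  unfold SchellingGame.util at hlt
  generalize g.fcount v i = f at *
  generalize g.ecount v i = e at *
  generalize g.fcount (Function.update v i z) i = f' at *
  generalize g.ecount (Function.update v i z) i = e' at *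
  have : f ≤ 2 := by omega
  have : e ≤ 2 := by omega
  have : f' ≤ 2 := by omega
  have : e' ≤ 2 := by omega
  clear hr hd hv hv'
  interval_cases f <;> interval_cases e <;> try omega
  all_goals interval_cases f' <;> interval_cases e' <;> first | omega | (exfalso; norm_num at hlt; done) | norm_num

/-- Every k-typed Schelling game whose topology is a star graph or a
graph of maximum degree 2 admits at least one equilibrium assignment. -/
theorem stmt3 (A V : Type) [Fintype A] [DecidableEq A] [Fintype V] [DecidableEq V]
    (g : SchellingGame A V) (hwf : g.WellFormed)
    (k : ℕ) (hk : 2 ≤ k) (typ : A → Fin k) (ht : g.IsTypedGame k typ)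
    (htop : IsStar g.top ∨ ∀ a : V, Nat.card {b : V // g.top.Adj a b} ≤ 2) :
    ∃ v : A → V, g.IsEquilibrium v := by
  obtain ⟨v₀, hv₀⟩ := exists_assign g hwf
  rcases htop with ⟨c, hc⟩ | hd
  · by_cases heq : g.IsEquilibrium v₀
    · exact ⟨v₀, heq⟩
    · unfold SchellingGame.IsEquilibrium at heq
      push Not at heq
      obtain ⟨i, hi, z, hz, hlt⟩ := heq hv₀
      have hv' := update_assign g v₀ hv₀ i hi z hz
      by_cases ho : ∃ o, Function.update v₀ i z o = c
      · obtain ⟨o, ho⟩ := ho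
        exact ⟨_, star_occ g c hc _ hv' o ho⟩
      · exfalso
        push Not at ho
        have h0 := util_zero' g (Function.update v₀ i z) i (by
          intro j _ h
          rw [hc] at h
          rcases h.2 with h | h
          · exact ho _ h
          · exact ho _ h)
        have := util_nonneg' g v₀ i
        linarith
  · obtain ⟨v, hv, hmax⟩ := Set.exists_max_image {v : A → V | g.IsAssignment v} (pot g)
      (Set.toFinite _) ⟨v₀, hv₀⟩
    refine ⟨v, hv, fun i hi z hz => ?_⟩
    by_contra hlt
    push Not at hlt
    have hv' := update_assign g v hv i hi z hz
    exact absurd (hmax _ hv') (not_le.mpr (pot_lt g hd v hv.1 i z hv'.1 hlt))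
end

section
/- For every k ≥ 2 there exists a k-typed Schelling game with no stubborn agents (all agents strategic) whose topology is a star with k+2 nodes, which admits an equilibrium assignment with social welfare 0 and also admits an equilibrium assignment with strictly positive social welfare; consequently the price of anarchy of k-typed Schelling games with no stubborn agents is unbounded. -/
theorem util_zero_aux {A V : Type} (g : SchellingGame A V) (v : A → V) (i : A)
    (h : ∀ j, g.net.Adj i j → ¬ g.top.Adj (v i) (v j)) : g.util v i = 0 := by
  have : g.fcount v i = 0 := by
    unfold SchellingGame.fcount
    have : IsEmpty {j : A // g.net.Adj i j ∧ g.top.Adj (v i) (v j)} :=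
      ⟨fun x => h x.1 x.2.1 x.2.2⟩
    exact Nat.card_of_isEmpty
  simp [SchellingGame.util, this]

theorem util_nonneg_aux {A V : Type} (g : SchellingGame A V) (v : A → V) (i : A) :
    0 ≤ g.util v i := by
  unfold SchellingGame.util
  split_ifs <;> positivity

theorem util_le_one_aux {A V : Type} (g : SchellingGame A V) (v : A → V) (i : A) :
    g.util v i ≤ 1 := by
  unfold SchellingGame.util
  split_ifs
  · norm_num
  · apply div_le_one_of_le₀
    · have : (0 : ℚ) ≤ g.ecount v i := by positivity
      linarith
    · positivity

theorem util_one_aux {A V : Type} [Finite A] (g : SchellingGame A V) (v : A → V) (i j : A)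
    (h1 : g.net.Adj i j) (h2 : g.top.Adj (v i) (v j))
    (h : ∀ j, j ≠ i → g.top.Adj (v i) (v j) → g.net.Adj i j) : g.util v i = 1 := by
  have he : g.ecount v i = 0 := by
    unfold SchellingGame.ecount
    have : IsEmpty {j : A // j ≠ i ∧ ¬ g.net.Adj i j ∧ g.top.Adj (v i) (v j)} :=
      ⟨fun x => x.2.2.1 (h x.1 x.2.1 x.2.2.2)⟩
    exact Nat.card_of_isEmpty
  have hf : g.fcount v i ≠ 0 := by
    unfold SchellingGame.fcount
    have : Nonempty {j : A // g.net.Adj i j ∧ g.top.Adj (v i) (v j)} := ⟨⟨j, h1, h2⟩⟩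
    exact Nat.card_pos.ne'
  have hf2 : (g.fcount v i : ℚ) ≠ 0 := by exact_mod_cast hf
  simp [SchellingGame.util, he, hf]

/-- the witness game -/
def starGame (k : ℕ) : SchellingGame (Fin (k + 1)) (Fin (k + 2)) where
  strategic := Finset.univ
  net := { Adj := fun i j => i ≠ j ∧ i.val - 1 = j.val - 1
           symm := ⟨fun _ _ h => ⟨h.1.symm, h.2.symm⟩⟩
           loopless := ⟨fun _ h => h.1 rfl⟩ }
  top := { Adj := fun a b => a ≠ b ∧ (a = 0 ∨ b = 0)
           symm := ⟨fun _ _ h => ⟨h.1.symm, h.2.symm⟩⟩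
           loopless := ⟨fun _ h => h.1 rfl⟩ }
  loc := Fin.castSucc

theorem starGame_net (k : ℕ) (i j : Fin (k + 1)) :
    (starGame k).net.Adj i j ↔ i.val ≠ j.val ∧ i.val - 1 = j.val - 1 := by
  simp only [starGame, Ne, Fin.ext_iff, Fin.val_zero]

theorem starGame_top (k : ℕ) (i j : Fin (k + 2)) :
    (starGame k).top.Adj i j ↔ i.val ≠ j.val ∧ (i.val = 0 ∨ j.val = 0) := by
  simp only [starGame, Ne, Fin.ext_iff, Fin.val_zero]

/-- the bad placement: agents 0 and 2 swapped -/
def badPl (k : ℕ) (hk : 2 ≤ k) (i : Fin (k + 1)) : Fin (k + 2) :=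
  ⟨if i.val = 2 then 0 else if i.val = 0 then 2 else i.val, by split_ifs <;> omega⟩

theorem badPl_val (k : ℕ) (hk : 2 ≤ k) (i : Fin (k + 1)) :
    (badPl k hk i).val = if i.val = 2 then 0 else if i.val = 0 then 2 else i.val := rfl

/-- For every k ≥ 2 there is a k-typed Schelling game with no stubborn
agents whose topology is a star with k+2 nodes admitting both an equilibrium with
social welfare 0 and an equilibrium with strictly positive social welfare (hence
the price of anarchy of such games is unbounded). -/
theorem stmt8 (k : ℕ) (hk : 2 ≤ k) :
    ∃ (g : SchellingGame (Fin (k + 1)) (Fin (k + 2))) (typ : Fin (k + 1) → Fin k),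
      g.WellFormed ∧ g.IsTypedGame k typ ∧ g.strategic = Finset.univ ∧
      IsStar g.top ∧
      (∃ v, g.IsEquilibrium v ∧ g.SW v = 0) ∧
      (∃ v, g.IsEquilibrium v ∧ 0 < g.SW v) := by
  refine ⟨starGame k, fun i => ⟨i.val - 1, by omega⟩, ?_, ?_, rfl, ?_, ?_, ?_⟩
  · refine ⟨by simp; omega, by simp, ?_⟩
    simp [starGame]
  · refine ⟨fun i j => ?_, fun c => ⟨c.succ, ?_⟩⟩
    · simp [starGame]
    · simp
  · exact ⟨0, fun a b => Iff.rfl⟩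
  · have hz : ∀ i, (starGame k).util (badPl k hk) i = 0 := by
      intro i
      apply util_zero_aux
      intro j hj
      rw [starGame_net] at hj
      rw [starGame_top, badPl_val, badPl_val]
      grind
    refine ⟨badPl k hk, ⟨⟨?_, ?_⟩, ?_⟩, ?_⟩
    · intro a b h
      rw [Fin.ext_iff, badPl_val, badPl_val] at h
      ext
      split_ifs at h <;> omega
    · intro i hi
      simp [starGame] at hi
    · intro i _ z hzz
      rw [hz i]
      apply le_of_eq
      apply util_zero_aux
      intro j hj
      have hne : j ≠ i := hj.ne'
      rw [starGame_net] at hj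
      rw [Function.update_self, Function.update_of_ne hne, starGame_top, badPl_val]
      have h2 := hzz ⟨2, by omega⟩
      rw [Ne, Fin.ext_iff, badPl_val] at h2
      simp only [if_true] at h2
      grind
    · simp [SchellingGame.SW, hz]
  · have h1 : (starGame k).util Fin.castSucc ⟨1, by omega⟩ = 1 := by
      apply util_one_aux _ _ _ ⟨0, by omega⟩
      · simp [starGame_net]
      · simp [starGame_top]
      · intro j _ h
        rw [starGame_net]
        rw [starGame_top] at h
        simp only [Fin.val_castSucc] at h ⊢
        omega
    refine ⟨Fin.castSucc, ⟨⟨Fin.castSucc_injective _, ?_⟩, ?_⟩, ?_⟩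
    · intro i hi
      simp [starGame] at hi
    · intro i _ z hz
      by_cases hi : i = ⟨1, by omega⟩
      · subst hi
        rw [h1]
        exact util_le_one_aux _ _ _
      · refine le_trans (le_of_eq ?_) (util_nonneg_aux _ _ _)
        apply util_zero_aux
        intro j hj
        have hne : j ≠ i := hj.ne'
        rw [starGame_net] at hj
        rw [Function.update_self, Function.update_of_ne hne, starGame_top]
        have h0 := hz ⟨0, by omega⟩
        simp only [Ne, Fin.ext_iff, Fin.val_castSucc] at h0 hi ⊢
        omega
    · unfold SchellingGame.SW
      exact Finset.sum_pos' (fun i _ => util_nonneg_aux _ _ _)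
        ⟨⟨1, by omega⟩, Finset.mem_univ _, by rw [h1]; norm_num⟩
end

section
/- In every k-typed Schelling game whose topology is a connected graph with strictly more nodes than agents, and in which every type contains exactly t ≥ 1 strategic agents and exactly ℓ ≥ 0 stubborn agents, every equilibrium assignment has social welfare at least t − 1; consequently, since the maximum social welfare is at most kt, the price of anarchy of any such game is at most kt/(t−1) = k + o(1). -/
namespace SchellingGame

theorem util_eq_div' {A V : Type} (g : SchellingGame A V) (v : A → V) (i : A) :
    g.util v i = (g.fcount v i : ℚ) / ((g.fcount v i : ℚ) + (g.ecount v i : ℚ)) := by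
  unfold util
  split_ifs with h
  · simp [h]
  · rfl

theorem util_le_one' {A V : Type} (g : SchellingGame A V) (v : A → V) (i : A) :
    g.util v i ≤ 1 := by
  rw [util_eq_div']
  apply div_le_one_of_le₀
  · have : (0 : ℚ) ≤ g.ecount v i := by positivity
    linarith
  · positivity

theorem exists_empty_nbr {A V : Type} [Fintype A] [Fintype V]
    (g : SchellingGame A V) (hwf2 : 2 ≤ Fintype.card A)
    (hlt : Fintype.card A < Fintype.card V) (hconn : g.top.Connected) (v : A → V) :
    ∃ z : V, (∀ j, v j ≠ z) ∧ ∃ a, g.top.Adj z (v a) := by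
  have hns : ¬ Function.Surjective v := fun h =>
    absurd (Fintype.card_le_of_surjective v h) (by omega)
  unfold Function.Surjective at hns
  push Not at hns
  obtain ⟨w, hw⟩ := hns
  have : Nonempty A := Fintype.card_pos_iff.mp (by omega)
  obtain ⟨a⟩ := this
  obtain ⟨p⟩ := hconn.preconnected (v a) w
  obtain ⟨d, _, h1, h2⟩ := p.exists_boundary_dart (Set.range v) ⟨a, rfl⟩
    (by rintro ⟨b, hb⟩; exact hw b hb)
  obtain ⟨b, hb⟩ := h1
  refine ⟨d.snd, fun j hj => h2 ⟨j, hj⟩, b, ?_⟩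
  rw [hb]
  exact d.adj.symm

open Classical in
theorem util_move_ge {A V : Type} [Fintype A] [DecidableEq A]
    (g : SchellingGame A V) (k : ℕ) (typ : A → Fin k)
    (ht : ∀ i j : A, g.net.Adj i j ↔ (i ≠ j ∧ typ i = typ j))
    (v : A → V) (z : V) (i : A) :
    (((Finset.univ.filter (fun j => g.top.Adj z (v j) ∧ typ j = typ i)).card : ℚ)
      - (if g.top.Adj z (v i) then 1 else 0)) /
      ((Finset.univ.filter (fun j => g.top.Adj z (v j))).card : ℚ)
    ≤ g.util (Function.update v i z) i := by
  rw [util_eq_div']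
  have hf : g.fcount (Function.update v i z) i =
      (Finset.univ.filter (fun j => (g.top.Adj z (v j) ∧ typ j = typ i) ∧ j ≠ i)).card := by
    unfold fcount
    rw [Nat.card_eq_fintype_card, Fintype.card_subtype]
    congr 1
    ext j
    simp only [Finset.mem_filter, Finset.mem_univ, true_and, ht]
    by_cases h : j = i
    · simp [h]
    · simp [h, Ne.symm h, eq_comm, and_comm]
  have hfe : g.fcount (Function.update v i z) i + g.ecount (Function.update v i z) i =
      (Finset.univ.filter (fun j => g.top.Adj z (v j) ∧ j ≠ i)).card := by
    have he : g.ecount (Function.update v i z) i =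
      (Finset.univ.filter (fun j => (g.top.Adj z (v j) ∧ ¬ typ j = typ i) ∧ j ≠ i)).card := by
      unfold ecount
      rw [Nat.card_eq_fintype_card, Fintype.card_subtype]
      congr 1
      ext j
      simp only [Finset.mem_filter, Finset.mem_univ, true_and, ht]
      by_cases h : j = i
      · simp [h]
      · simp [h, Ne.symm h, eq_comm, and_comm]
    rw [hf, he, ← Finset.card_union_of_disjoint]
    · congr 1
      ext j
      simp only [Finset.mem_filter, Finset.mem_univ, true_and, Finset.mem_union]
      tauto
    · rw [Finset.disjoint_left]
      intro j
      simp only [Finset.mem_filter, Finset.mem_univ, true_and]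
      tauto
  have hD : (Finset.univ.filter (fun j => g.top.Adj z (v j) ∧ j ≠ i)).card ≤
      (Finset.univ.filter (fun j => g.top.Adj z (v j))).card := by
    apply Finset.card_le_card
    intro j
    simp only [Finset.mem_filter, Finset.mem_univ, true_and]
    tauto
  have hn : ((Finset.univ.filter (fun j => g.top.Adj z (v j) ∧ typ j = typ i)).card : ℚ)
      - (if g.top.Adj z (v i) then 1 else 0) = g.fcount (Function.update v i z) i := by
    have hE : (Finset.univ.filter (fun j => (g.top.Adj z (v j) ∧ typ j = typ i) ∧ j ≠ i)) =
        (Finset.univ.filter (fun j => g.top.Adj z (v j) ∧ typ j = typ i)).erase i := by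
      ext j
      simp only [Finset.mem_filter, Finset.mem_univ, true_and, Finset.mem_erase]
      tauto
    rw [hf, hE]
    split_ifs with h
    · rw [Finset.cast_card_erase_of_mem (by simp [h])]
    · rw [Finset.erase_eq_of_notMem (by simp [h])]
      simp
  rw [hn]
  have hfe' : ((g.fcount (Function.update v i z) i : ℚ) + g.ecount (Function.update v i z) i)
    ≤ ((Finset.univ.filter (fun j => g.top.Adj z (v j))).card : ℚ) := by
    exact_mod_cast hfe.trans_le hD
  rcases Nat.eq_zero_or_pos (g.fcount (Function.update v i z) i) with h0 | h0
  · simp [h0]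
  · have h0' : (0 : ℚ) < g.fcount (Function.update v i z) i := by exact_mod_cast h0
    apply div_le_div_of_nonneg_left h0'.le _ hfe'
    positivity

end SchellingGame

/-- in every k-typed Schelling game with a connected topology having
strictly more nodes than agents, in which every type has exactly t ≥ 1 strategic and
exactly ℓ stubborn agents, every equilibrium has social welfare at least t - 1; and
every assignment has social welfare at most kt (so the price of anarchy is at most
kt/(t-1) = k + o(1)). -/
theorem stmt14 (A V : Type) [Fintype A] [DecidableEq A] [Fintype V] [DecidableEq V]
    (g : SchellingGame A V) (hwf : g.WellFormed)
    (k : ℕ) (hk : 2 ≤ k) (typ : A → Fin k) (ht : g.IsTypedGame k typ)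
    (t l : ℕ) (htpos : 1 ≤ t)
    (hstratCount : ∀ c : Fin k, Nat.card {i // typ i = c ∧ i ∈ g.strategic} = t)
    (hstubCount : ∀ c : Fin k, Nat.card {i // typ i = c ∧ i ∉ g.strategic} = l)
    (hconn : g.top.Connected) :
    (∀ v, g.IsEquilibrium v → (t : ℚ) - 1 ≤ g.SW v) ∧
    (∀ v, g.IsAssignment v → g.SW v ≤ (k * t : ℚ)) := by
  classical
  have hcnt : ∀ c : Fin k, (g.strategic.filter (fun i => typ i = c)).card = t := by
    intro c
    rw [← hstratCount c, Nat.card_eq_fintype_card, Fintype.card_subtype]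
    congr 1
    ext j
    simp [and_comm]
  refine ⟨?_, ?_⟩
  · intro v hv
    obtain ⟨z, hz, a, ha⟩ := g.exists_empty_nbr hwf.1 hwf.2.1 hconn v
    set N := Finset.univ.filter (fun j => g.top.Adj z (v j)) with hN
    have hDpos : (0 : ℚ) < (N.card : ℚ) := by
      have : 0 < N.card := Finset.card_pos.mpr ⟨a, by simp [hN, ha]⟩
      exact_mod_cast this
    have key : ∀ i ∈ g.strategic, _ := fun i hi =>
      (g.util_move_ge k typ ht.1 v z i).trans (hv.2 i hi z hz)
    have hs := Finset.sum_le_sum key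
    change _ ≤ g.SW v at hs
    refine le_trans ?_ hs
    rw [← Finset.sum_div, le_div_iff₀ hDpos, Finset.sum_sub_distrib]
    have h1 : ∑ i ∈ g.strategic, ((Finset.univ.filter
        (fun j => g.top.Adj z (v j) ∧ typ j = typ i)).card : ℚ) = t * N.card := by
      have e : ∀ i, ((Finset.univ.filter
        (fun j => g.top.Adj z (v j) ∧ typ j = typ i)).card : ℚ) =
          ∑ j ∈ N, if typ i = typ j then (1 : ℚ) else 0 := by
        intro i
        rw [Finset.sum_boole, hN, Finset.filter_filter]
        simp only [eq_comm]
      simp only [e]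
      rw [Finset.sum_comm]
      simp only [Finset.sum_boole, hcnt]
      simp [mul_comm]
    have h2 : ∑ i ∈ g.strategic, (if g.top.Adj z (v i) then (1 : ℚ) else 0) ≤ N.card := by
      rw [Finset.sum_boole]
      exact_mod_cast Finset.card_le_card (Finset.filter_subset_filter _ (Finset.subset_univ _))
    rw [h1]
    linarith
  · intro v _
    have hc : g.strategic.card = k * t := by
      rw [Finset.card_eq_sum_card_fiberwise (f := typ) (t := Finset.univ) (by simp)]
      simp [hcnt]
    calc g.SW v ≤ ∑ i ∈ g.strategic, (1 : ℚ) :=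
          Finset.sum_le_sum fun i _ => g.util_le_one' v i
      _ = k * t := by simp [hc]
end

section
/- Consider the linear-utility variant of a social Schelling game in which, for fixed reals α, β ≥ 0, the utility of agent i under assignment v is α·f_i(v) − β·e_i(v). Define Φ(v) = Σ_{i∈N} (α·f_i(v) − β·e_i(v)). Then whenever a strategic agent i relocates from her node to an unoccupied node, producing assignment v' from assignment v, it holds that Φ(v') − Φ(v) = 2·(u_i(v') − u_i(v)); in particular, Φ strictly increases under every strictly profitable deviation, and consequently every such game admits an equilibrium assignment. -/
namespace SchellingGame

variable {A V : Type} [Fintype A] [DecidableEq A] [Fintype V] [DecidableEq V]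

/-- Linear-utility variant: the utility of agent `i` is `α·f_i(v) − β·e_i(v)`. -/
noncomputable def linUtil (g : SchellingGame A V) (a b : ℝ) (v : A → V) (i : A) : ℝ :=
  a * (g.fcount v i : ℝ) - b * (g.ecount v i : ℝ)

/-- The potential `Φ(v) = Σ_{i ∈ N} (α·f_i(v) − β·e_i(v))`. -/
noncomputable def linPotential (g : SchellingGame A V) (a b : ℝ) (v : A → V) : ℝ :=
  ∑ i : A, g.linUtil a b v i

/-- Equilibrium for the linear-utility variant: no strategic agent can strictly
increase her (linear) utility by relocating to an unoccupied node. -/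
def LinIsEquilibrium (g : SchellingGame A V) (a b : ℝ) (v : A → V) : Prop :=
  g.IsAssignment v ∧ ∀ i ∈ g.strategic, ∀ z : V, (∀ j : A, v j ≠ z) →
    g.linUtil a b (Function.update v i z) i ≤ g.linUtil a b v i

/-- Social welfare in the linear-utility variant. -/
noncomputable def linSW (g : SchellingGame A V) (a b : ℝ) (v : A → V) : ℝ :=
  ∑ i ∈ g.strategic, g.linUtil a b v i

end SchellingGame

namespace SchellingGame

variable {A V : Type} [Fintype A] [DecidableEq A] [Fintype V] [DecidableEq V]

open Classical in
/-- Pairwise weight. -/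
noncomputable def pw (g : SchellingGame A V) (a b : ℝ) (v : A → V) (i j : A) : ℝ :=
  if g.top.Adj (v i) (v j) then (if g.net.Adj i j then a else -b) else 0

lemma linUtil_eq (g : SchellingGame A V) (a b : ℝ) (v : A → V) (i : A) :
    g.linUtil a b v i = ∑ j, g.pw a b v i j := by
  classical
  unfold linUtil fcount ecount
  rw [Nat.card_eq_fintype_card, Nat.card_eq_fintype_card, Fintype.card_subtype,
    Fintype.card_subtype, Finset.card_filter, Finset.card_filter]
  push_cast
  rw [Finset.mul_sum, Finset.mul_sum, ← Finset.sum_sub_distrib]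
  refine Finset.sum_congr rfl fun j _ => ?_
  unfold pw
  by_cases hji : j = i
  · subst hji
    simp
  · by_cases h1 : g.top.Adj (v i) (v j) <;> by_cases h2 : g.net.Adj i j <;> simp [h1, h2, hji]

lemma pw_symm (g : SchellingGame A V) (a b : ℝ) (v : A → V) (i j : A) :
    g.pw a b v i j = g.pw a b v j i := by
  unfold pw
  have h1 := g.top.adj_comm (v i) (v j)
  have h2 := g.net.adj_comm i j
  by_cases h3 : g.top.Adj (v j) (v i) <;> by_cases h4 : g.net.Adj j i <;> simp [h1, h2, h3, h4]

lemma pw_self (g : SchellingGame A V) (a b : ℝ) (v : A → V) (i : A) :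
    g.pw a b v i i = 0 := by
  simp [pw]

lemma pot_diff (g : SchellingGame A V) (a b : ℝ) (v : A → V) (i : A) (z : V) :
    g.linPotential a b (Function.update v i z) - g.linPotential a b v =
        2 * (g.linUtil a b (Function.update v i z) i - g.linUtil a b v i) := by
  unfold linPotential
  simp only [linUtil_eq]
  set w := Function.update v i z with hw
  have key : ∀ p q, g.pw a b w p q - g.pw a b v p q =
      (if p = i then g.pw a b w i q - g.pw a b v i q else 0) +
      (if q = i then g.pw a b w i p - g.pw a b v i p else 0) := by
    intro p q
    by_cases hp : p = i
    · subst hp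
      by_cases hq : q = p
      · subst hq
        simp [pw_self]
      · simp [hq]
    · by_cases hq : q = i
      · subst hq
        simp [hp, g.pw_symm a b _ p q]
      · have e1 : w p = v p := Function.update_of_ne hp _ _
        have e2 : w q = v q := Function.update_of_ne hq _ _
        have e3 : g.pw a b w p q = g.pw a b v p q := by
          unfold pw
          rw [e1, e2]
        simp [hp, hq, e3]
  rw [← Finset.sum_sub_distrib]
  simp only [← Finset.sum_sub_distrib]
  rw [Finset.sum_congr rfl fun p _ => Finset.sum_congr rfl fun q _ => key p q]
  simp only [Finset.sum_add_distrib]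
  rw [Finset.sum_comm]
  simp only [Finset.sum_ite_eq', Finset.mem_univ, if_true]
  ring

lemma exists_assignment (g : SchellingGame A V) (hwf : g.WellFormed) :
    ∃ v, g.IsAssignment v := by
  obtain ⟨_, h2, h3⟩ := hwf
  obtain ⟨t, ht1, _, ht⟩ := Finset.exists_subsuperset_card_eq
    (Finset.subset_univ (g.strategicᶜ.image g.loc)) (n := Fintype.card A)
    (Finset.card_image_le.trans (Finset.card_le_univ _)) h2.le
  obtain ⟨e, he⟩ := Finset.exists_equiv_extend_of_card_eq ht.symm ht1 h3
  exact ⟨fun i => (e i : V), Subtype.val_injective.comp e.injective,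
    fun i hi => he i (Finset.mem_compl.2 hi)⟩

end SchellingGame

/-- in the linear-utility variant, whenever a strategic agent relocates
from her node to an unoccupied node, Φ changes by exactly twice the change of her own
utility; in particular Φ strictly increases under strictly profitable deviations, and
every such game admits an equilibrium. -/
theorem stmt18 (A V : Type) [Fintype A] [DecidableEq A] [Fintype V] [DecidableEq V]
    (g : SchellingGame A V) (hwf : g.WellFormed)
    (a b : ℝ) (ha : 0 ≤ a) (hb : 0 ≤ b) :
    (∀ (v : A → V), g.IsAssignment v → ∀ i ∈ g.strategic, ∀ z : V, (∀ j : A, v j ≠ z) →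
      g.linPotential a b (Function.update v i z) - g.linPotential a b v =
        2 * (g.linUtil a b (Function.update v i z) i - g.linUtil a b v i)) ∧
    (∃ v, g.LinIsEquilibrium a b v) := by
  refine ⟨fun v _ i _ z _ => g.pot_diff a b v i z, ?_⟩
  obtain ⟨v, hv, hmax⟩ := Set.exists_max_image {v | g.IsAssignment v} (g.linPotential a b)
    (Set.toFinite _) (g.exists_assignment hwf)
  refine ⟨v, hv, fun i hi z hz => ?_⟩
  have h := g.pot_diff a b v i z
  have hass : g.IsAssignment (Function.update v i z) := by
    refine ⟨?_, fun j hj => ?_⟩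
    · intro p q hpq
      by_cases hp : p = i <;> by_cases hq : q = i
      · rw [hp, hq]
      · subst hp
        simp [hq] at hpq
        exact absurd hpq.symm (hz q)
      · subst hq
        simp [hp] at hpq
        exact absurd hpq (hz p)
      · simp [hp, hq] at hpq
        exact hv.1 hpq
    · have hji : j ≠ i := fun h => hj (h ▸ hi)
      rw [Function.update_of_ne hji]
      exact hv.2 j hj
  have := hmax _ hass
  linarith
end
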